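/- For any poset P, the poset 𝐝(Σ P) of closed d-sets of Σ P, ordered by inclusion, is a dcpo; the map η : P → 𝐝(Σ P), η(x) = ↓x, is Scott continuous; and for every Scott continuous map f : P → Q into a dcpo Q there is a unique Scott continuous map f̃ : 𝐝(Σ P) → Q with f̃ ∘ η = f. Thus ⟨𝐝(Σ P), η⟩ is a D_s-completion (dcpo-completion) of P. -/

import Mathlib

universe u v

open Set

/-- The specialization order on a topological space: `specLE x y` iff `x ∈ closure {y}`. -/
def specLE {X : Type*} [TopologicalSpace X] (x y : X) : Prop :=
  x ∈ closure ({y} : Set X)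

/-- `a` is an upper bound of `D` with respect to the specialization order. -/
def specUB {X : Type*} [TopologicalSpace X] (D : Set X) (a : X) : Prop :=
  ∀ d ∈ D, specLE d a

/-- `a` is a least upper bound of `D` with respect to the specialization order. -/
def specLUB {X : Type*} [TopologicalSpace X] (D : Set X) (a : X) : Prop :=
  specUB D a ∧ ∀ b, specUB D b → specLE a b

/-- `U` is Scott open with respect to the specialization order. -/
def ScottOpenSpec {X : Type*} [TopologicalSpace X] (U : Set X) : Prop :=
  (∀ x y, specLE x y → x ∈ U → y ∈ U) ∧
  ∀ D : Set X, D.Nonempty → DirectedOn specLE D → ∀ a, specLUB D a → a ∈ U →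
    (D ∩ U).Nonempty

/-- A d-space (monotone convergence space): a T0 space which is a dcpo in its
specialization order and in which every open set is Scott open with respect to
the specialization order. -/
def DSpace (X : Type*) [TopologicalSpace X] : Prop :=
  T0Space X ∧
  (∀ D : Set X, D.Nonempty → DirectedOn specLE D → ∃ a, specLUB D a) ∧
  (∀ U : Set X, IsOpen U → ScottOpenSpec U)

/-- A set is saturated if it is an intersection of open sets. -/
def Saturated {X : Type*} [TopologicalSpace X] (A : Set X) : Prop :=
  ∃ 𝒰 : Set (Set X), (∀ U ∈ 𝒰, IsOpen U) ∧ A = ⋂₀ 𝒰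

/-- A T0 space is well-filtered if every filtered (under reverse inclusion) family of
nonempty compact saturated sets whose intersection is contained in an open set `U`
has a member contained in `U`. -/
def WellFiltered (X : Type*) [TopologicalSpace X] : Prop :=
  T0Space X ∧
  ∀ 𝒦 : Set (Set X), 𝒦.Nonempty →
    (∀ K ∈ 𝒦, K.Nonempty ∧ IsCompact K ∧ Saturated K) →
    DirectedOn (fun A B => B ⊆ A) 𝒦 →
    ∀ U : Set X, IsOpen U → ⋂₀ 𝒦 ⊆ U → ∃ K ∈ 𝒦, K ⊆ U

/-- A nonempty closed set which is irreducible. -/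
def IrredClosed {X : Type*} [TopologicalSpace X] (A : Set X) : Prop :=
  A.Nonempty ∧ IsClosed A ∧
  ∀ F₁ F₂ : Set X, IsClosed F₁ → IsClosed F₂ → A ⊆ F₁ ∪ F₂ → (A ⊆ F₁ ∨ A ⊆ F₂)

/-- A space is sober if every irreducible closed set is the closure of a unique point. -/
def Sober (X : Type*) [TopologicalSpace X] : Prop :=
  ∀ A : Set X, IrredClosed A → ∃! x : X, A = closure ({x} : Set X)

/-- The specialization preorder on a topological space. -/
def specPreorder (Y : Type*) [TopologicalSpace Y] : Preorder Y where
  le := specLE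
  le_refl x := subset_closure rfl
  le_trans x y z hxy hyz :=
    closure_minimal (Set.singleton_subset_iff.mpr hyz) isClosed_closure hxy

/-- A Scott open subset of a poset: an upper set inaccessible by suprema of directed sets. -/
def IsScottOpen {P : Type*} [Preorder P] (U : Set P) : Prop :=
  IsUpperSet U ∧
  ∀ D : Set P, D.Nonempty → DirectedOn (· ≤ ·) D → ∀ a, IsLUB D a → a ∈ U →
    (D ∩ U).Nonempty

/-- The Scott topology on a poset. `Σ P` is `P` equipped with `scottTop P`. -/
def scottTop (P : Type*) [Preorder P] : TopologicalSpace P where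
  IsOpen := IsScottOpen
  isOpen_univ := by
    refine ⟨isUpperSet_univ, fun D hD _ _ _ _ => ?_⟩
    obtain ⟨d, hd⟩ := hD
    exact ⟨d, hd, trivial⟩
  isOpen_inter := by
    rintro U V ⟨hU1, hU2⟩ ⟨hV1, hV2⟩
    refine ⟨hU1.inter hV1, ?_⟩
    rintro D hne hdir a ha ⟨haU, haV⟩
    obtain ⟨d1, hd1D, hd1U⟩ := hU2 D hne hdir a ha haU
    obtain ⟨d2, hd2D, hd2V⟩ := hV2 D hne hdir a ha haV
    obtain ⟨d3, hd3D, h13, h23⟩ := hdir d1 hd1D d2 hd2D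
    exact ⟨d3, hd3D, hU1 h13 hd1U, hV1 h23 hd2V⟩
  isOpen_sUnion := by
    intro S hS
    refine ⟨isUpperSet_sUnion fun s hs => (hS s hs).1, ?_⟩
    rintro D hne hdir a ha ⟨U, hUS, haU⟩
    obtain ⟨d, hdD, hdU⟩ := (hS U hUS).2 D hne hdir a ha haU
    exact ⟨d, hdD, U, hUS, hdU⟩

/-- A dcpo: every nonempty directed subset has a least upper bound. -/
def IsDcpo (P : Type*) [Preorder P] : Prop :=
  ∀ D : Set P, D.Nonempty → DirectedOn (· ≤ ·) D → ∃ a, IsLUB D a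

/-- The way-below relation. -/
def wayBelow {P : Type*} [Preorder P] (x y : P) : Prop :=
  ∀ D : Set P, D.Nonempty → DirectedOn (· ≤ ·) D → ∀ a, IsLUB D a → y ≤ a →
    ∃ d ∈ D, x ≤ d

/-- A poset is Noetherian if every (nonempty) directed subset has a greatest member. -/
def Noetherian (P : Type*) [Preorder P] : Prop :=
  ∀ D : Set P, D.Nonempty → DirectedOn (· ≤ ·) D → ∃ m ∈ D, ∀ d ∈ D, d ≤ m

/-- An ideal: a (nonempty) directed lower set. -/
def IsIdealSet {P : Type*} [Preorder P] (I : Set P) : Prop :=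
  I.Nonempty ∧ DirectedOn (· ≤ ·) I ∧ IsLowerSet I

/-- The Alexandroff topology on a poset: the open sets are the upper sets. -/
def alexTop (P : Type*) [Preorder P] : TopologicalSpace P where
  IsOpen := IsUpperSet
  isOpen_univ := isUpperSet_univ
  isOpen_inter _ _ := IsUpperSet.inter
  isOpen_sUnion _ h := isUpperSet_sUnion h

/-- The space `X_⊤` obtained from `X` by adjoining a new top point `⊤` (here `none`):
the closed sets are the closed sets of `X` together with the whole space. -/
def topTop (X : Type*) [TopologicalSpace X] : TopologicalSpace (Option X) where
  IsOpen V := V = ∅ ∨ ∃ U : Set X, IsOpen U ∧ V = insert none (some '' U)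
  isOpen_univ := by
    refine Or.inr ⟨Set.univ, isOpen_univ, ?_⟩
    ext (_ | a) <;> simp
  isOpen_inter := by
    rintro V W (rfl | ⟨U₁, hU₁, rfl⟩) hW
    · exact Or.inl (by simp)
    rcases hW with rfl | ⟨U₂, hU₂, rfl⟩
    · exact Or.inl (by simp)
    · refine Or.inr ⟨U₁ ∩ U₂, hU₁.inter hU₂, ?_⟩
      ext (_ | a) <;> simp
  isOpen_sUnion := by
    classical
    intro S hS
    by_cases h0 : ⋃₀ S = ∅
    · exact Or.inl h0
    · refine Or.inr ⟨{x : X | some x ∈ ⋃₀ S}, ?_, ?_⟩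
      · have h1 : {x : X | some x ∈ ⋃₀ S} = ⋃ V ∈ S, some ⁻¹' V := by
          ext x; simp [Set.mem_sUnion]
        rw [h1]
        refine isOpen_biUnion fun V hV => ?_
        rcases hS V hV with rfl | ⟨U, hU, rfl⟩
        · rw [Set.preimage_empty]; exact isOpen_empty
        · have h2 : (some ⁻¹' (insert none (some '' U)) : Set X) = U := by
            ext x; simp
          rw [h2]; exact hU
      · have hnone : (none : Option X) ∈ ⋃₀ S := by
          obtain ⟨v, V, hVS, hvV⟩ := Set.nonempty_iff_ne_empty.mpr h0
          rcases hS V hVS with rfl | ⟨U, hU, rfl⟩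
          · exact absurd hvV (by simp)
          · exact ⟨_, hVS, by simp⟩
        ext (_ | a)
        · simp only [Set.mem_insert_iff, true_or, iff_true]
          exact hnone
        · simp [Set.mem_sUnion]

/-- A `𝐊`-set of a space `X` (relative to a class `K` of spaces): a set whose image
under any continuous map to a `𝐊`-space has the closure of a unique point as closure. -/
def IsKSet (K : (Y : Type u) → TopologicalSpace Y → Prop)
    (X : Type u) [tX : TopologicalSpace X] (A : Set X) : Prop :=
  ∀ (Y : Type u) (tY : TopologicalSpace Y), K Y tY →
    ∀ f : X → Y, @Continuous X Y tX tY f →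
      ∃! y : Y, @closure Y tY (f '' A) = @closure Y tY {y}

/-- `𝐊(X)`: the collection of closed `𝐊`-sets of `X`. -/
def KSets (K : (Y : Type u) → TopologicalSpace Y → Prop)
    (X : Type u) [TopologicalSpace X] : Set (Set X) :=
  {A : Set X | IsClosed A ∧ IsKSet K X A}

/-- The lower Vietoris topology on a family `G` of subsets of `X`, generated by the
sets `◊U = {A ∈ G | A ∩ U ≠ ∅}` for `U` open. -/
def lowerVietoris {X : Type*} [TopologicalSpace X] (G : Set (Set X)) :
    TopologicalSpace ↥G :=
  TopologicalSpace.generateFrom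
    {S : Set ↥G | ∃ U : Set X, IsOpen U ∧ S = {A : ↥G | ((A : Set X) ∩ U).Nonempty}}

/-- A class `K` of spaces is adequate if `P_H(𝐊(X))` is a `𝐊`-space for every T0 space `X`. -/
def Adequate (K : (Y : Type u) → TopologicalSpace Y → Prop) : Prop :=
  ∀ (X : Type u) (tX : TopologicalSpace X), @T0Space X tX →
    K ↥(@KSets K X tX) (@lowerVietoris X tX (@KSets K X tX))

/-- `⟨Z, η⟩` is a `𝐊`-reflection of `X`. -/
def IsKReflection (K : (Y : Type u) → TopologicalSpace Y → Prop)
    (X : Type u) (tX : TopologicalSpace X)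
    (Z : Type u) (tZ : TopologicalSpace Z) (η : X → Z) : Prop :=
  K Z tZ ∧ @Continuous X Z tX tZ η ∧
  ∀ (Y : Type u) (tY : TopologicalSpace Y), K Y tY →
    ∀ f : X → Y, @Continuous X Y tX tY f →
      ∃! g : Z → Y, @Continuous Z Y tZ tY g ∧ g ∘ η = f

/-- The carrier of the Johnstone poset `𝕁 = ℕ × (ℕ ∪ {ω})`. -/
structure Johnstone where
  fst : ℕ
  snd : WithTop ℕ

/-- The Johnstone order: `(j, k) ≤ (m, n)` iff `j = m` and `k ≤ n`, or `n = ω` and `k ≤ m`. -/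
instance : PartialOrder Johnstone where
  le p q := (p.fst = q.fst ∧ p.snd ≤ q.snd) ∨ (q.snd = ⊤ ∧ p.snd ≤ (q.fst : WithTop ℕ))
  le_refl p := Or.inl ⟨rfl, le_rfl⟩
  le_trans p q r hpq hqr := by
    rcases hpq with ⟨h1, h2⟩ | ⟨h1, h2⟩ <;> rcases hqr with ⟨h3, h4⟩ | ⟨h3, h4⟩
    · exact Or.inl ⟨h1.trans h3, h2.trans h4⟩
    · exact Or.inr ⟨h3, h2.trans h4⟩
    · have hr : r.snd = ⊤ := top_le_iff.mp (h1 ▸ h4)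
      exact Or.inr ⟨hr, h3 ▸ h2⟩
    · rw [h1] at h4
      exact absurd h4 (by simp)
  le_antisymm p q hpq hqp := by
    obtain ⟨pf, ps⟩ := p
    obtain ⟨qf, qs⟩ := q
    rcases hpq with ⟨h1, h2⟩ | ⟨h1, h2⟩ <;> rcases hqp with ⟨h3, h4⟩ | ⟨h3, h4⟩
    · dsimp at *
      cases h1
      cases le_antisymm h2 h4
      rfl
    · dsimp at *
      rw [h3] at h2
      rw [top_le_iff.mp h2] at h4
      exact absurd h4 (by simp)
    · dsimp at *
      rw [h1] at h4
      rw [top_le_iff.mp h4] at h2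
      exact absurd h2 (by simp)
    · dsimp at *
      rw [h3] at h2
      exact absurd h2 (by simp)

/-- The class of d-spaces. -/
def dClass : (Y : Type u) → TopologicalSpace Y → Prop := fun Y tY => @DSpace Y tY

/-- The class of well-filtered spaces. -/
def wfClass : (Y : Type u) → TopologicalSpace Y → Prop := fun Y tY => @WellFiltered Y tY

/-- The class of sober spaces. -/
def soberClass : (Y : Type u) → TopologicalSpace Y → Prop := fun Y tY => @Sober Y tY

/-!
Everything rests on one induction principle: a subset `E` of `𝐝(Σ P)` that contains every `↓x` and
is closed under directed suprema is all of `𝐝(Σ P)`. Indeed `E` is itself a dcpo, so `Σ E` is a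
d-space, and `x ↦ ↓x` is Scott continuous as a map `P → E`. A closed d-set `A` therefore has a
point `B ∈ E` generic for the closure of `{↓x | x ∈ A}` in `Σ E`, hence also for its closure in the
larger space `Σ 𝐝(Σ P)`. A generic point is a supremum, and the supremum of `{↓x | x ∈ A}` in
`𝐝(Σ P)` is `A`; so `A = B ∈ E`.

Given a Scott continuous `f : P → Q`, the sets `A` for which `f '' A` has a supremum form such an
`E`, and `A ↦ sup (f '' A)` is the required extension. It is unique because two Scott continuous
maps agree on a set closed under directed suprema.
-/

section KSets

variable {K : (Y : Type u) → TopologicalSpace Y → Prop} {X : Type u} [TopologicalSpace X]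

theorem IsKSet.exists_isGenericPoint {A : Set X} (hA : IsKSet K X A) {Y : Type u}
    [tY : TopologicalSpace Y] (hY : K Y tY) {f : X → Y} (hf : Continuous f) :
    ∃ y, IsGenericPoint y (closure (f '' A)) :=
  (hA Y tY hY f hf).exists.imp fun _ h => h.symm

theorem isKSet_iff_exists_isGenericPoint
    (hK : ∀ (Y : Type u) (tY : TopologicalSpace Y), K Y tY → T0Space Y) {A : Set X} :
    IsKSet K X A ↔ ∀ (Y : Type u) (tY : TopologicalSpace Y), K Y tY →
      ∀ f : X → Y, Continuous f → ∃ y, IsGenericPoint y (closure (f '' A)) := by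
  refine ⟨fun hA Y tY hY f hf => hA.exists_isGenericPoint hY hf, fun h Y tY hY f hf => ?_⟩
  have := hK Y tY hY
  obtain ⟨y, hy⟩ := h Y tY hY f hf
  exact ⟨y, hy.symm, fun z hz => IsGenericPoint.eq hz.symm hy⟩

theorem isKSet_singleton
    (hK : ∀ (Y : Type u) (tY : TopologicalSpace Y), K Y tY → T0Space Y) (x : X) :
    IsKSet K X {x} := by
  refine (isKSet_iff_exists_isGenericPoint hK).2 fun Y _ _ f _ => ⟨f x, ?_⟩
  rw [image_singleton]
  exact isGenericPoint_closure

theorem IsKSet.closure_mem_KSets {A : Set X} (hA : IsKSet K X A) : closure A ∈ KSets K X := by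
  refine ⟨isClosed_closure, fun Y tY hY f hf => ?_⟩
  rw [closure_image_closure hf]
  exact hA Y tY hY f hf

end KSets

section DirectedUnion

theorem DSpace.isGenericPoint_of_specLUB {Y : Type*} [TopologicalSpace Y] (hY : DSpace Y)
    {D : Set Y} (hne : D.Nonempty) (hdir : DirectedOn specLE D) {a : Y} (ha : specLUB D a) :
    IsGenericPoint a (closure D) := by
  have ha_mem : a ∈ closure D := by
    by_contra ha_notMem
    obtain ⟨d, hdD, hd⟩ := (hY.2.2 _ isClosed_closure.isOpen_compl).2 D hne hdir a ha ha_notMem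
    exact hd (subset_closure hdD)
  exact (closure_minimal (singleton_subset_iff.2 ha_mem) isClosed_closure).antisymm
    (closure_minimal ha.1 isClosed_closure)

variable {K : (Y : Type u) → TopologicalSpace Y → Prop} {X : Type u} [TopologicalSpace X]

theorem isKSet_sUnion (hK : K ≤ dClass) {𝒜 : Set (Set X)} (hne : 𝒜.Nonempty)
    (hdir : DirectedOn (· ⊆ ·) 𝒜) (h𝒜 : ∀ A ∈ 𝒜, IsKSet K X A) : IsKSet K X (⋃₀ 𝒜) := by
  refine (isKSet_iff_exists_isGenericPoint fun Y tY hY => (hK Y tY hY).1).2 fun Y tY hY f hf => ?_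
  have hdY : DSpace Y := hK Y tY hY
  have : Nonempty Y := hne.elim fun A hA =>
    ((h𝒜 A hA).exists_isGenericPoint hY hf).elim fun y _ => ⟨y⟩
  choose! y hy using fun A hA => (h𝒜 A hA).exists_isGenericPoint hY hf
  have hdir_y : DirectedOn specLE (y '' 𝒜) := by
    rintro _ ⟨A, hA, rfl⟩ _ ⟨B, hB, rfl⟩
    obtain ⟨C, hC, hAC, hBC⟩ := hdir A hA B hB
    have specLE_of_subset : ∀ A ∈ 𝒜, A ⊆ C → specLE (y A) (y C) := fun A hA hAC =>
      (hy C hC).def.ge (closure_mono (image_mono hAC) (hy A hA).mem)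
    exact ⟨y C, mem_image_of_mem y hC, specLE_of_subset A hA hAC, specLE_of_subset B hB hBC⟩
  have hclosure : closure (f '' ⋃₀ 𝒜) = closure (y '' 𝒜) := by
    refine (closure_minimal ?_ isClosed_closure).antisymm (closure_minimal ?_ isClosed_closure)
    · rintro _ ⟨x, ⟨A, hA, hxA⟩, rfl⟩
      have hfx : f x ∈ closure {y A} := (hy A hA).def ▸ subset_closure (mem_image_of_mem f hxA)
      exact closure_mono (singleton_subset_iff.2 (mem_image_of_mem y hA)) hfx
    · rintro _ ⟨A, hA, rfl⟩
      exact closure_mono (image_mono (subset_sUnion_of_mem hA)) (hy A hA).mem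
  obtain ⟨a, ha⟩ := hdY.2.1 _ (hne.image y) hdir_y
  exact ⟨a, hclosure ▸ hdY.isGenericPoint_of_specLUB (hne.image y) hdir_y ha⟩

theorem closure_sUnion_mem_KSets (hK : K ≤ dClass) {𝒟 : Set ↥(KSets K X)} (hne : 𝒟.Nonempty)
    (hdir : DirectedOn (· ≤ ·) 𝒟) : closure (⋃₀ (Subtype.val '' 𝒟)) ∈ KSets K X := by
  refine (isKSet_sUnion hK (hne.image _) (directedOn_image.2 hdir) ?_).closure_mem_KSets
  rintro _ ⟨A, -, rfl⟩
  exact A.2.2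

theorem isLUB_closure_sUnion (hK : K ≤ dClass) {𝒟 : Set ↥(KSets K X)} (hne : 𝒟.Nonempty)
    (hdir : DirectedOn (· ≤ ·) 𝒟) :
    IsLUB 𝒟 ⟨closure (⋃₀ (Subtype.val '' 𝒟)), closure_sUnion_mem_KSets hK hne hdir⟩ := by
  refine ⟨fun A hA => ?_, fun B hB => ?_⟩
  · exact (subset_sUnion_of_mem (mem_image_of_mem _ hA)).trans subset_closure
  · refine closure_minimal (sUnion_subset ?_) B.2.1
    rintro _ ⟨A, hA, rfl⟩
    exact hB hA

theorem isDcpo_KSets (hK : K ≤ dClass) : IsDcpo ↥(KSets K X) :=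
  fun _ hne hdir => ⟨_, isLUB_closure_sUnion hK hne hdir⟩

end DirectedUnion

section SubDcpo

variable {α β : Type*} [Preorder α] [Preorder β] {E : Set α}

theorem exists_isLUB_image_subtype_val (hα : IsDcpo α) (hE : DirSupClosed E) {D : Set E}
    (hne : D.Nonempty) (hdir : DirectedOn (· ≤ ·) D) :
    ∃ a : E, IsLUB (Subtype.val '' D) (a : α) := by
  have hne' := hne.image Subtype.val
  have hdir' : DirectedOn (· ≤ ·) (Subtype.val '' D) := directedOn_image.2 hdir
  obtain ⟨a, ha⟩ := hα _ hne' hdir'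
  exact ⟨⟨a, hE (Subtype.coe_image_subset E D) hne' hdir' ha⟩, ha⟩

theorem isDcpo_subtype (hα : IsDcpo α) (hE : DirSupClosed E) : IsDcpo E := fun _ hne hdir =>
  (exists_isLUB_image_subtype_val hα hE hne hdir).imp fun _ =>
    IsLUB.of_image (f := Subtype.val) Iff.rfl

theorem scottContinuous_subtype_val (hα : IsDcpo α) (hE : DirSupClosed E) :
    ScottContinuous (Subtype.val : E → α) := by
  intro D hne hdir b hb
  obtain ⟨a, ha⟩ := exists_isLUB_image_subtype_val hα hE hne hdir
  have ha' : IsLUB D a := IsLUB.of_image (f := Subtype.val) Iff.rfl ha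
  exact ⟨fun _ ⟨d, hd, h⟩ => h ▸ hb.1 hd, fun _ hc => le_trans (hb.2 ha'.1) (ha.2 hc)⟩

theorem scottContinuous_codRestrict {f : β → α} (hf : ScottContinuous f) (hfE : ∀ x, f x ∈ E) :
    ScottContinuous (codRestrict f E hfE) := by
  intro D hne hdir a ha
  refine IsLUB.of_image (f := Subtype.val) Iff.rfl ?_
  rw [image_image]
  exact hf hne hdir ha

end SubDcpo

section ClosedIic

variable {α β : Type*} [TopologicalSpace α] [TopologicalSpace β] [Preorder β] [ClosedIicTopology β]

theorem isLUB_closure_iff {S : Set β} {b : β} : IsLUB (closure S) b ↔ IsLUB S b :=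
  isLUB_congr (upperBounds_closure S)

theorem isLUB_of_isGenericPoint_closure {S : Set β} {b : β} (hb : IsGenericPoint b (closure S)) :
    IsLUB S b :=
  isLUB_closure_iff.1 (hb.def ▸ isLUB_closure_iff.2 isLUB_singleton)

theorem isLUB_image_closure_iff {f : α → β} (hf : Continuous f) {S : Set α} {b : β} :
    IsLUB (f '' closure S) b ↔ IsLUB (f '' S) b := by
  rw [← isLUB_closure_iff, closure_image_closure hf, isLUB_closure_iff]

end ClosedIic

section ScottTopology

theorem isScott_scottTop (P : Type*) [Preorder P] : @Topology.IsScott P univ _ (scottTop P) := by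
  have isOpen_scott_iff (U : Set P) :
      @IsOpen P (Topology.scott P univ) U ↔ IsUpperSet U ∧ DirSupInacc U := by
    let _ := Topology.scott P univ
    have : Topology.IsScott P univ := ⟨rfl⟩
    rw [← dirSupInaccOn_univ]
    exact Topology.IsScott.isOpen_iff_isUpperSet_and_dirSupInaccOn
  exact @Topology.IsScott.mk P univ _ (scottTop P)
    (TopologicalSpace.ext_iff.2 fun U => (isOpen_scott_iff U).symm)

attribute [local instance] scottTop isScott_scottTop

theorem scottContinuous_iff_continuous {P Q : Type*} [Preorder P] [Preorder Q] {f : P → Q} :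
    ScottContinuous f ↔ Continuous f := by
  rw [← scottContinuousOn_univ,
    Topology.IsScott.scottContinuousOn_iff_continuous fun _ _ _ => mem_univ _]

theorem specLE_iff_le {P : Type*} [Preorder P] {x y : P} : specLE x y ↔ x ≤ y := by
  rw [specLE, Topology.IsScott.closure_singleton, mem_Iic]

theorem dSpace_scottTop {Q : Type*} [PartialOrder Q] (hQ : IsDcpo Q) : DSpace Q := by
  have specLE_eq : (specLE : Q → Q → Prop) = (· ≤ ·) := by
    ext x y
    exact specLE_iff_le
  have specLUB_iff (D : Set Q) (a : Q) : specLUB D a ↔ IsLUB D a := by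
    simp only [specLUB, specUB, specLE_eq]
    rfl
  refine ⟨inferInstance, ?_, fun U hU => ⟨?_, ?_⟩⟩ <;> simp only [specLE_eq, specLUB_iff]
  · exact hQ
  · exact fun x y hxy hx => hU.1 hxy hx
  · exact hU.2

theorem IsKSet.exists_forall_isLUB_image_comp {P : Type u} [Preorder P] {A : Set P}
    (hA : IsKSet dClass P A) {Q : Type u} [PartialOrder Q] (hQ : IsDcpo Q) {f : P → Q}
    (hf : ScottContinuous f) {α : Type*} [Preorder α] :
    ∃ q, ∀ g : Q → α, ScottContinuous g → IsLUB (g ∘ f '' A) (g q) := by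
  obtain ⟨q, hq⟩ :=
    hA.exists_isGenericPoint (dSpace_scottTop hQ) (scottContinuous_iff_continuous.1 hf)
  refine ⟨q, fun g hg => isLUB_of_isGenericPoint_closure ?_⟩
  have hg_cont : Continuous g := scottContinuous_iff_continuous.1 hg
  rw [image_comp, ← closure_image_closure hg_cont]
  exact hq.image hg_cont

/-- The poset `𝐝(Σ P)` of closed d-sets of `P` in its Scott topology, ordered by inclusion; it is
the carrier of the dcpo-completion of `P`. -/
abbrev DCompletion (P : Type u) [Preorder P] : Type u :=
  ↥(KSets dClass P)

namespace DCompletion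

variable {P : Type u} [Preorder P]

theorem isDcpo (P : Type u) [Preorder P] : IsDcpo (DCompletion P) :=
  isDcpo_KSets le_rfl

theorem Iic_mem_KSets (x : P) : Iic x ∈ KSets dClass P := by
  rw [← Topology.IsScott.closure_singleton]
  exact (isKSet_singleton (fun _ _ hY => hY.1) x).closure_mem_KSets

/-- The unit `η : P → 𝐝(Σ P)` of the completion, sending `x` to `↓x`. -/
def principal (x : P) : DCompletion P :=
  ⟨Iic x, Iic_mem_KSets x⟩

theorem principal_le_iff {x : P} {A : DCompletion P} : principal x ≤ A ↔ x ∈ (A : Set P) :=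
  ⟨fun h => h le_rfl, fun hx _ hy => Topology.IsScott.isLowerSet_of_isClosed A.2.1 hy hx⟩

theorem scottContinuous_principal : ScottContinuous (principal : P → DCompletion P) := by
  intro D hne hdir a ha
  refine isLUB_iff_le_iff.2 fun A => ?_
  have hA := Topology.IsScott.isClosed_iff_isLowerSet_and_dirSupClosed.1 A.2.1
  simp only [mem_upperBounds, forall_mem_image, principal_le_iff]
  exact ⟨fun haA d hd => hA.1 (ha.1 hd) haA, fun hDA => hA.2 hDA hne hdir ha⟩

theorem isLUB_image_principal (A : DCompletion P) : IsLUB (principal '' (A : Set P)) A := by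
  refine isLUB_iff_le_iff.2 fun B => ?_
  simp only [mem_upperBounds, forall_mem_image, principal_le_iff]
  rfl

theorem mem_of_dirSupClosed {E : Set (DCompletion P)} (hE : DirSupClosed E)
    (hprincipal : ∀ x, principal x ∈ E) (A : DCompletion P) : A ∈ E := by
  obtain ⟨B, hB⟩ := A.2.2.exists_forall_isLUB_image_comp (α := DCompletion P)
    (isDcpo_subtype (isDcpo P) hE)
    (scottContinuous_codRestrict scottContinuous_principal hprincipal)
  have hAB : A = B :=
    (isLUB_image_principal A).unique (hB Subtype.val (scottContinuous_subtype_val (isDcpo P) hE))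
  exact hAB ▸ B.2

section Extension

variable {Q : Type v}

theorem isLUB_image_Iic [Preorder Q] {f : P → Q} (hf : Monotone f) (x : P) :
    IsLUB (f '' Iic x) (f x) :=
  (hf.map_isGreatest isGreatest_Iic).isLUB

theorem isLUB_image_iff_of_isLUB [Preorder Q] {f : P → Q} (hf : ScottContinuous f)
    {𝒟 : Set (DCompletion P)} (hne : 𝒟.Nonempty) (hdir : DirectedOn (· ≤ ·) 𝒟)
    {A : DCompletion P} (hA : IsLUB 𝒟 A) {g : DCompletion P → Q}
    (hg : ∀ B ∈ 𝒟, IsLUB (f '' B) (g B)) {q : Q} :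
    IsLUB (f '' A) q ↔ IsLUB (g '' 𝒟) q := by
  obtain rfl := hA.unique (isLUB_closure_sUnion le_rfl hne hdir)
  rw [isLUB_image_closure_iff (scottContinuous_iff_continuous.1 hf), image_eq_range g,
    isLUB_iUnion_iff_of_isLUB fun B : 𝒟 => hg B B.2, sUnion_image, image_iUnion₂, biUnion_eq_iUnion]

theorem exists_isLUB_image [Preorder Q] (hQ : IsDcpo Q) {f : P → Q}
    (hf : ScottContinuous f) (A : DCompletion P) : ∃ q, IsLUB (f '' A) q := by
  refine mem_of_dirSupClosed (E := {A | ∃ q, IsLUB (f '' A) q}) ?_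
    (fun x => ⟨f x, isLUB_image_Iic hf.monotone x⟩) A
  intro 𝒟 h𝒟 hne hdir A hA
  have : Nonempty Q := hne.elim fun B hB => (h𝒟 hB).elim fun q _ => ⟨q⟩
  choose! g hg using show ∀ B ∈ 𝒟, ∃ q, IsLUB (f '' B) q from h𝒟
  have hdir_g : DirectedOn (· ≤ ·) (g '' 𝒟) := by
    rintro _ ⟨B, hB, rfl⟩ _ ⟨C, hC, rfl⟩
    obtain ⟨F, hF, hBF, hCF⟩ := hdir B hB C hC
    exact ⟨g F, mem_image_of_mem g hF, (hg B hB).mono (hg F hF) (image_mono hBF),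
      (hg C hC).mono (hg F hF) (image_mono hCF)⟩
  obtain ⟨q, hq⟩ := hQ _ (hne.image g) hdir_g
  exact ⟨q, (isLUB_image_iff_of_isLUB hf hne hdir hA hg).2 hq⟩

theorem scottContinuous_of_isLUB_image [Preorder Q] {f : P → Q} (hf : ScottContinuous f)
    {g : DCompletion P → Q} (hg : ∀ A : DCompletion P, IsLUB (f '' A) (g A)) : ScottContinuous g :=
  fun _ hne hdir A hA =>
    (isLUB_image_iff_of_isLUB hf hne hdir hA fun B _ => hg B).1 (hg A)

theorem eq_of_comp_principal_eq [PartialOrder Q] {g h : DCompletion P → Q}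
    (hg : ScottContinuous g) (hh : ScottContinuous h) (hgh : g ∘ principal = h ∘ principal) :
    g = h := by
  funext A
  refine mem_of_dirSupClosed (E := {A | g A = h A}) ?_ (congrFun hgh) A
  intro 𝒟 h𝒟 hne hdir A hA
  exact (hg hne hdir hA).unique (image_congr h𝒟 ▸ hh hne hdir hA)

theorem existsUnique_scottContinuous_comp_principal_eq [PartialOrder Q] (hQ : IsDcpo Q)
    {f : P → Q} (hf : ScottContinuous f) :
    ∃! g : DCompletion P → Q, ScottContinuous g ∧ g ∘ principal = f := by
  choose g hg using exists_isLUB_image hQ hf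
  have hg_comp : g ∘ principal = f := funext fun x =>
    (hg (principal x)).unique (isLUB_image_Iic hf.monotone x)
  have hg_cont : ScottContinuous g := scottContinuous_of_isLUB_image hf hg
  exact ⟨g, ⟨hg_cont, hg_comp⟩, fun h ⟨hh_cont, hh_comp⟩ =>
    eq_of_comp_principal_eq hh_cont hg_cont (hh_comp.trans hg_comp.symm)⟩

end Extension

end DCompletion

end ScottTopology

theorem stmt12_general (P : Type u) [Preorder P] :
    IsDcpo ↥(@KSets dClass P (scottTop P)) ∧
    (∀ x : P, {p : P | p ≤ x} ∈ @KSets dClass P (scottTop P)) ∧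
    ∀ η : P → ↥(@KSets dClass P (scottTop P)),
      (∀ x : P, (η x : Set P) = {p : P | p ≤ x}) →
      ScottContinuous η ∧
      ∀ (Q : Type v) [PartialOrder Q], IsDcpo Q →
        ∀ f : P → Q, ScottContinuous f →
          ∃! g : ↥(@KSets dClass P (scottTop P)) → Q, ScottContinuous g ∧ g ∘ η = f := by
  refine ⟨DCompletion.isDcpo P, DCompletion.Iic_mem_KSets, fun η hη => ?_⟩
  obtain rfl : η = DCompletion.principal := funext fun x => Subtype.ext (hη x)
  exact ⟨DCompletion.scottContinuous_principal, fun Q _ hQ f hf =>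
    DCompletion.existsUnique_scottContinuous_comp_principal_eq hQ hf⟩

/-- For any poset `P`, `𝐝(Σ P)` (ordered by inclusion) is a dcpo,
`η : P → 𝐝(Σ P)`, `η x = ↓x`, is Scott continuous, and every Scott continuous map from
`P` to a dcpo factors uniquely Scott-continuously through `η`; thus `⟨𝐝(Σ P), η⟩` is a
`D_s`-completion (dcpo-completion) of `P`. -/
theorem stmt12 (P : Type u) [PartialOrder P] :
    IsDcpo ↥(@KSets dClass P (scottTop P)) ∧
    (∀ x : P, {p : P | p ≤ x} ∈ @KSets dClass P (scottTop P)) ∧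
    ∀ η : P → ↥(@KSets dClass P (scottTop P)),
      (∀ x : P, (η x : Set P) = {p : P | p ≤ x}) →
      ScottContinuous η ∧
      ∀ (Q : Type u) [PartialOrder Q], IsDcpo Q →
        ∀ f : P → Q, ScottContinuous f →
          ∃! g : ↥(@KSets dClass P (scottTop P)) → Q, ScottContinuous g ∧ g ∘ η = f :=
  stmt12_general.{u, u} P
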